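/- For every degree α = Σ_d c_d ξ^d − 2μ with all c_d ≥ 0 (almost all zero) and 0 ≤ μ < Σ_d c_d (so that |α| > 0), the homogeneous component R_α of R in degree α is a cyclic group of order m(α). -/

import Mathlib

/-! The map `u_d ↦ 1`, `a_d ↦ d` defines a ring homomorphism `R → ZMod n`, hence `R → ZMod q` for
every prime `q ∣ n` (`phi`).  It turns out to be injective on `R_α`, but the argument is organised
prime by prime.

In degree `α` with `μ < Σ c_d` every monomial contains some `a_d`, so it is killed by `n`.  As `n` is
squarefree there are integers `e_q` (`q ∣ n` prime) with `Σ e_q = 1` and `n ∣ q * e_q`; they act on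
`R_α` as orthogonal idempotents that cut out the `q`-primary parts.

* If `Σ_{q ∣ d} c_d > μ`, each monomial of degree `α` contains an `a_d` with `q ∣ d`.  Then
  `(n/d) a_d = 0` forces the `q`-part of `R_α` to vanish (`smul_mon_eq_zero`).
* If `Σ_{q ∣ d} c_d ≤ μ`, there is a monomial `M_q` of degree `α` that contains `a_d` only for
  `q ∤ d` (`exists_good`).  The relation `d · a_s u_d = s · u_s a_d` exchanges an `a_s` for an `a_d`
  and is solvable for `a_s u_d` modulo `q` when `q ∤ d`, so the `q`-part of each monomial is a
  multiple of that of `M_q` (`connect`).  Since `phi` does not kill `M_q`, this part has order `q`.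

So `Σ_q e_q M_q`, over the primes of the second kind, generates `R_α` and has order `m(α)`. -/


/-! Let `n` be a product of distinct odd primes.  `R` is the commutative ring generated by
elements `u_d` and `a_d`, one for each divisor `d` of `n` with `d ≠ n`, subject to the
relations `(n/d)·a_d = 0` and
`(d/gcd(d,s))·a_s·u_d = (s/gcd(d,s))·u_s·a_d` for all such divisors `d`, `s`.  It is graded
by the free abelian group on the symbols `ξ^d` (`d ∣ n`, `d ≠ n`) together with a
`ℤ`-summand recording dimension, with `deg u_d = ξ^d − 2` and `deg a_d = ξ^d` (the symbol
`ξ^d` carrying dimension `2`). -/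

/-- The index type of the divisors `d ∣ n`, `d ≠ n`. -/
abbrev DivIdx (n : ℕ) := {d : ℕ // d ∣ n ∧ d ≠ n}

/-- Generators: `Sum.inl d` is the Euler class style generator `u_d` and `Sum.inr d` is the
orientation class style generator `a_d`. -/
abbrev RGen (n : ℕ) := DivIdx n ⊕ DivIdx n

open MvPolynomial in
/-- The defining relations of the ring `R`. -/
def relSet (n : ℕ) : Set (MvPolynomial (RGen n) ℤ) :=
  (Set.range fun d : DivIdx n => (n / d.1) • (X (Sum.inr d) : MvPolynomial (RGen n) ℤ)) ∪
  (Set.range fun ds : DivIdx n × DivIdx n =>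
    (ds.1.1 / Nat.gcd ds.1.1 ds.2.1) •
        ((X (Sum.inr ds.2) : MvPolynomial (RGen n) ℤ) * X (Sum.inl ds.1)) -
      (ds.2.1 / Nat.gcd ds.1.1 ds.2.1) •
        ((X (Sum.inl ds.2) : MvPolynomial (RGen n) ℤ) * X (Sum.inr ds.1)))

/-- The ring `R`: the polynomial ring on the generators `u_d`, `a_d` modulo the relations. -/
abbrev Rring (n : ℕ) := MvPolynomial (RGen n) ℤ ⧸ Ideal.span (relSet n)

/-- The image of `u_d` in `R`. -/
noncomputable def uGen (n : ℕ) (d : DivIdx n) : Rring n :=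
  Ideal.Quotient.mk (Ideal.span (relSet n)) (MvPolynomial.X (Sum.inl d))

/-- The grading group: the free abelian group on the symbols `ξ^d` together with a
`ℤ`-summand recording dimension. -/
abbrev RDeg (n : ℕ) := (DivIdx n →₀ ℤ) × ℤ

/-- Degrees of the generators: `deg u_d = ξ^d − 2` and `deg a_d = ξ^d` (where the
`ℤ`-component records the dimension in excess of twice the `ξ`-part, so that the degree
`Σ_d c_d ξ^d − 2μ` is the pair `(Σ_d c_d ξ^d, −2μ)`). -/
noncomputable def degOfGen (n : ℕ) : RGen n → RDeg n
  | Sum.inl d => (Finsupp.single d 1, -2)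
  | Sum.inr d => (Finsupp.single d 1, 0)

/-- The degree of a monomial of `MvPolynomial (RGen n) ℤ`. -/
noncomputable def mdeg (n : ℕ) (m : RGen n →₀ ℕ) : RDeg n :=
  m.sum fun g c => (c : ℤ) • degOfGen n g

/-- The homogeneous component of `R` in degree `α`: the additive subgroup generated by the
images of the monomials of degree `α`. -/
noncomputable def Rcomp (n : ℕ) (α : RDeg n) : AddSubgroup (Rring n) :=
  AddSubgroup.closure {x | ∃ m : RGen n →₀ ℕ, mdeg n m = α ∧
    x = Ideal.Quotient.mk (Ideal.span (relSet n)) (MvPolynomial.monomial m 1)}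

/-- The degree `α = Σ_d c_d ξ^d − 2μ`. -/
noncomputable def degAlpha (n : ℕ) (c : DivIdx n →₀ ℕ) (μ : ℤ) : RDeg n :=
  (Finsupp.mapRange (fun t : ℕ => (t : ℤ)) (by simp) c, -2 * μ)

/-- For the degree `α = Σ_d c_d ξ^d − 2μ` and `m ∣ n` one has
`|α^{C_m}| = 2(Σ_{d : m ∣ d} c_d − μ)`; `mAlpha` is the product
`m(α) = ∏ { p prime : p ∣ n, |α^{C_p}| ≤ 0 }`. -/
def mAlpha (n : ℕ) (c : DivIdx n →₀ ℕ) (μ : ℤ) : ℕ :=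
  ∏ q ∈ n.primeFactors,
    if (∑ d ∈ c.support, if q ∣ d.1 then (c d : ℤ) else 0) ≤ μ then q else 1

/-- The monomial `∏_d u_d^(c d)`. -/
noncomputable def uMonomial (n : ℕ) (c : DivIdx n →₀ ℕ) : RGen n →₀ ℕ :=
  Finsupp.embDomain ⟨Sum.inl, Sum.inl_injective⟩ c

/-- The image of the monomial `∏_d u_d^(c d)` in `R`. -/
noncomputable def uElem (n : ℕ) (c : DivIdx n →₀ ℕ) : Rring n :=
  Ideal.Quotient.mk (Ideal.span (relSet n)) (MvPolynomial.monomial (uMonomial n c) 1)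

/-! ### Monomials of `R` and their relations -/

/-- The image in `R` of the monomial with exponents `m`. -/
noncomputable def mon (n : ℕ) (m : RGen n →₀ ℕ) : Rring n :=
  Ideal.Quotient.mk (Ideal.span (relSet n)) (MvPolynomial.monomial m 1)

lemma mon_add (n : ℕ) (m m' : RGen n →₀ ℕ) : mon n (m + m') = mon n m * mon n m' := by
  simp [mon, ← map_mul, MvPolynomial.monomial_mul]

lemma kill_gen (n : ℕ) (d : DivIdx n) :
    ((n / d.1 : ℕ) : ℤ) • mon n (Finsupp.single (Sum.inr d) 1) = 0 := by
  have h : (n / d.1) • (MvPolynomial.X (Sum.inr d) : MvPolynomial (RGen n) ℤ) ∈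
      Ideal.span (relSet n) := Ideal.subset_span (Or.inl ⟨d, rfl⟩)
  rw [← Ideal.Quotient.eq_zero_iff_mem, map_nsmul] at h
  rw [natCast_zsmul]
  exact h

lemma swap_gen (n : ℕ) (d s : DivIdx n) :
    (d.1 : ℤ) • (mon n (Finsupp.single (Sum.inr s) 1) * mon n (Finsupp.single (Sum.inl d) 1)) =
    (s.1 : ℤ) • (mon n (Finsupp.single (Sum.inl s) 1) * mon n (Finsupp.single (Sum.inr d) 1)) := by
  have h : _ ∈ Ideal.span (relSet n) := Ideal.subset_span (Or.inr ⟨(d, s), rfl⟩)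
  rw [← Ideal.Quotient.eq_zero_iff_mem, map_sub, map_nsmul, map_nsmul, sub_eq_zero, map_mul,
    map_mul] at h
  have h2 := congrArg (fun x => Nat.gcd d.1 s.1 • x) h
  simp only [smul_smul, Nat.mul_div_cancel' (Nat.gcd_dvd_left d.1 s.1),
    Nat.mul_div_cancel' (Nat.gcd_dvd_right d.1 s.1)] at h2
  rw [natCast_zsmul, natCast_zsmul]
  exact h2

lemma kill_mon (n : ℕ) (m : RGen n →₀ ℕ) (d : DivIdx n) (h : m (Sum.inr d) ≠ 0) :
    ((n / d.1 : ℕ) : ℤ) • mon n m = 0 := by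
  have e : m = Finsupp.single (Sum.inr d) 1 + (m - Finsupp.single (Sum.inr d) 1) := by
    rw [add_tsub_cancel_of_le]
    simpa [Finsupp.single_le_iff] using Nat.one_le_iff_ne_zero.mpr h
  rw [e, mon_add, ← smul_mul_assoc, kill_gen, zero_mul]

/-- A monomial containing some `a_d` is killed by every multiple of `n`. -/
lemma n_kill (n : ℕ) (m : RGen n →₀ ℕ) (d : DivIdx n) (h : m (Sum.inr d) ≠ 0) (t : ℤ)
    (ht : (n : ℤ) ∣ t) : t • mon n m = 0 := by
  obtain ⟨w, rfl⟩ := ht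
  have h1 : ((n : ℕ) : ℤ) = (d.1 : ℤ) * ((n / d.1 : ℕ) : ℤ) := by
    exact_mod_cast (Nat.mul_div_cancel' d.2.1).symm
  rw [h1, mul_right_comm, mul_smul, kill_mon n m d h, smul_zero]

/-- If `q ∣ d`, a monomial containing `a_d` has trivial `q`-part: here `e` is a multiple of `n/q`,
hence of `n/d`. -/
lemma smul_mon_eq_zero (n q : ℕ) (hq : q.Prime) (e : ℤ) (he : (n : ℤ) ∣ q * e)
    (m : RGen n →₀ ℕ) (d : DivIdx n) (h : m (Sum.inr d) ≠ 0) (hd : q ∣ d.1) :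
    e • mon n m = 0 := by
  obtain ⟨w, hw⟩ := he
  obtain ⟨d', hd'⟩ := hd
  have h1 : ((n : ℕ) : ℤ) = (d.1 : ℤ) * ((n / d.1 : ℕ) : ℤ) := by
    exact_mod_cast (Nat.mul_div_cancel' d.2.1).symm
  have h2 : (d.1 : ℤ) = q * d' := by exact_mod_cast hd'
  have hq0 : (q : ℤ) ≠ 0 := by exact_mod_cast hq.ne_zero
  have h3 : e = (d' * w) * ((n / d.1 : ℕ) : ℤ) := by
    apply mul_left_cancel₀ hq0
    rw [hw, h1, h2]; ring
  rw [h3, mul_smul, kill_mon n m d h, smul_zero]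

/-! ### Degrees -/

lemma mdeg_eq_iff (n : ℕ) [Fintype (DivIdx n)] (m : RGen n →₀ ℕ) (c : DivIdx n →₀ ℕ) (μ : ℕ) :
    mdeg n m = degAlpha n c (μ : ℤ) ↔
      (∀ d, m (Sum.inl d) + m (Sum.inr d) = c d) ∧ ∑ d, m (Sum.inl d) = μ := by
  classical
  have h : mdeg n m = ∑ g, (m g : ℤ) • degOfGen n g := by
    unfold mdeg; rw [Finsupp.sum_fintype]; simp
  rw [h, degAlpha, Fintype.sum_sum_type, Prod.ext_iff, Finsupp.ext_iff]
  refine and_congr (forall_congr' fun d => ?_) ?_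
  · simp only [degOfGen, Prod.fst_add, Prod.fst_sum, Prod.smul_fst, Finsupp.add_apply,
      Finsupp.finsetSum_apply, Finsupp.smul_apply, Finsupp.single_apply, Finsupp.mapRange_apply]
    simp
    norm_cast
  · simp only [degOfGen, Prod.snd_add, Prod.snd_sum, Prod.smul_snd]
    simp only [smul_eq_mul, mul_zero, Finset.sum_const_zero, add_zero, ← Finset.sum_mul]
    rw [← Nat.cast_sum]
    omega

lemma exists_le_sum_eq {ι : Type*} [Fintype ι] (c : ι → ℕ) (N : ℕ) (h : N ≤ ∑ i, c i) :
    ∃ f : ι → ℕ, (∀ i, f i ≤ c i) ∧ ∑ i, f i = N := by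
  classical
  induction N with
  | zero => exact ⟨fun _ => 0, by simp, by simp⟩
  | succ N ih =>
    obtain ⟨f, hf, hs⟩ := ih (by omega)
    obtain ⟨i, -, hi⟩ : ∃ i ∈ Finset.univ, f i < c i := by
      apply Finset.exists_lt_of_sum_lt
      omega
    refine ⟨f + Pi.single i 1, fun j => ?_, ?_⟩
    · by_cases hj : j = i
      · subst hj; simp; omega
      · simp [hj, hf j]
    · simp [Finset.sum_add_distrib, hs]

/-- If `Σ_{q ∣ d} c_d ≤ μ`, some monomial of degree `α` contains `a_d` only for `q ∤ d`. -/
lemma exists_good (n : ℕ) [Fintype (DivIdx n)] (c : DivIdx n →₀ ℕ) (μ q : ℕ)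
    (hμ : μ ≤ ∑ d, c d) (hq : (∑ d : DivIdx n, if q ∣ d.1 then c d else 0) ≤ μ) :
    ∃ m : RGen n →₀ ℕ, mdeg n m = degAlpha n c (μ : ℤ) ∧
      ∀ d, m (Sum.inr d) ≠ 0 → ¬ q ∣ d.1 := by
  have hsplit : (∑ d : DivIdx n, if q ∣ d.1 then c d else 0) +
      (∑ d : DivIdx n, if q ∣ d.1 then 0 else c d) = ∑ d, c d := by
    rw [← Finset.sum_add_distrib]
    exact Finset.sum_congr rfl fun d _ => by split_ifs <;> simp
  obtain ⟨f, hf, hs⟩ := exists_le_sum_eq (fun d : DivIdx n => if q ∣ d.1 then 0 else c d)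
    (∑ d, c d - μ) (by omega)
  have hfc : ∀ d, f d ≤ c d := fun d => (hf d).trans (by split_ifs <;> simp)
  refine ⟨Finsupp.equivFunOnFinite.symm (Sum.elim (fun d => c d - f d) f), ?_, ?_⟩
  · rw [mdeg_eq_iff]
    refine ⟨fun d => ?_, ?_⟩
    · simpa using Nat.sub_add_cancel (hfc d)
    · have : ∑ d, (c d - f d) + ∑ d, f d = ∑ d, c d := by
        rw [← Finset.sum_add_distrib]
        exact Finset.sum_congr rfl fun d _ => Nat.sub_add_cancel (hfc d)
      simp only [Finsupp.equivFunOnFinite_symm_apply_apply, Sum.elim_inl]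
      omega
  · intro d hd hqd
    have := hf d
    simp [hqd] at this
    simp [this] at hd

lemma exists_inr (n : ℕ) [Fintype (DivIdx n)] (c : DivIdx n →₀ ℕ) (μ : ℕ)
    (hμ : μ < ∑ d, c d) (m : RGen n →₀ ℕ) (hm : mdeg n m = degAlpha n c (μ : ℤ)) :
    ∃ d, m (Sum.inr d) ≠ 0 := by
  rw [mdeg_eq_iff] at hm
  by_contra! h
  have : ∑ d, c d = ∑ d, m (Sum.inl d) :=
    Finset.sum_congr rfl fun d _ => by rw [← hm.1 d, h d, add_zero]
  omega

lemma exists_inr_dvd (n : ℕ) [Fintype (DivIdx n)] (c : DivIdx n →₀ ℕ) (μ q : ℕ)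
    (hq : μ < ∑ d : DivIdx n, if q ∣ d.1 then c d else 0)
    (m : RGen n →₀ ℕ) (hm : mdeg n m = degAlpha n c (μ : ℤ)) :
    ∃ d, m (Sum.inr d) ≠ 0 ∧ q ∣ d.1 := by
  rw [mdeg_eq_iff] at hm
  by_contra! h
  have : (∑ d : DivIdx n, if q ∣ d.1 then c d else 0) ≤ ∑ d, m (Sum.inl d) := by
    refine Finset.sum_le_sum fun d _ => ?_
    split_ifs with hd
    · rw [← hm.1 d]
      by_cases h0 : m (Sum.inr d) = 0
      · omega
      · exact absurd hd (h d h0)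
    · exact Nat.zero_le _
  omega

/-! ### Cyclicity of the primary parts -/

/-- Two monomials of degree `α` have proportional `q`-parts, if the second contains `a_d` only for
`q ∤ d`.  Induction on the number `N` of factors `a` of `m` in excess of those of `m'`. -/
lemma connect (n : ℕ) [Fintype (DivIdx n)] (c : DivIdx n →₀ ℕ) (μ q : ℕ) (hq : q.Prime)
    (e : ℤ) (he : (n : ℤ) ∣ q * e)
    (m' : RGen n →₀ ℕ) (hm' : mdeg n m' = degAlpha n c (μ : ℤ))
    (hg : ∀ d, m' (Sum.inr d) ≠ 0 → ¬ q ∣ d.1) (N : ℕ) :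
    ∀ m : RGen n →₀ ℕ, mdeg n m = degAlpha n c (μ : ℤ) →
      ∑ d, (m (Sum.inr d) - m' (Sum.inr d)) = N →
      ∃ z : ℤ, e • mon n m = z • e • mon n m' := by
  classical
  have hm'2 := (mdeg_eq_iff n m' c μ).1 hm'
  induction N with
  | zero =>
    intro m hm h0
    have hm2 := (mdeg_eq_iff n m c μ).1 hm
    have hle : ∀ d, m (Sum.inr d) ≤ m' (Sum.inr d) := fun d => by
      have := (Finset.sum_eq_zero_iff.1 h0) d (Finset.mem_univ d)
      omega
    have hle2 : ∀ d ∈ Finset.univ, m' (Sum.inl d) ≤ m (Sum.inl d) := fun d _ => by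
      have := hle d; have := hm2.1 d; have := hm'2.1 d; omega
    have heq := (Finset.sum_eq_sum_iff_of_le hle2).1 (hm'2.2.trans hm2.2.symm)
    have : m = m' := by
      ext g
      rcases g with d | d
      · exact (heq d (Finset.mem_univ d)).symm
      · have := heq d (Finset.mem_univ d); have := hm2.1 d; have := hm'2.1 d; omega
    exact ⟨1, by rw [this, one_smul]⟩
  | succ N ih =>
    intro m hm hN
    have hm2 := (mdeg_eq_iff n m c μ).1 hm
    obtain ⟨s, hs⟩ : ∃ s, m' (Sum.inr s) < m (Sum.inr s) := by
      by_contra! h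
      have : ∑ d, (m (Sum.inr d) - m' (Sum.inr d)) = 0 :=
        Finset.sum_eq_zero fun d _ => Nat.sub_eq_zero_of_le (h d)
      omega
    -- `m` and `m'` have equally many factors `u`, so the excess at `s` is compensated somewhere
    obtain ⟨d, hd⟩ : ∃ d, m (Sum.inr d) < m' (Sum.inr d) := by
      by_contra! h
      have : ∑ d, m (Sum.inl d) < ∑ d, m' (Sum.inl d) := by
        apply Finset.sum_lt_sum
        · intro d _
          have := h d; have := hm2.1 d; have := hm'2.1 d; omega
        · exact ⟨s, Finset.mem_univ s, by have := hm2.1 s; have := hm'2.1 s; omega⟩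
      rw [hm2.2, hm'2.2] at this
      exact lt_irrefl _ this
    have hds : d ≠ s := by rintro rfl; omega
    have hqd : ¬ q ∣ d.1 := hg d (by omega)
    have hud : m (Sum.inl d) ≠ 0 := by have := hm2.1 d; have := hm'2.1 d; omega
    set m0 : RGen n →₀ ℕ := m - (Finsupp.single (Sum.inr s) 1 + Finsupp.single (Sum.inl d) 1)
      with hm0
    have hmm : m = m0 + (Finsupp.single (Sum.inr s) 1 + Finsupp.single (Sum.inl d) 1) := by
      rw [hm0, tsub_add_cancel_of_le]
      intro g
      rcases g with x | x
      · by_cases hx : d = x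
        · subst hx; simp; omega
        · simp [hx]
      · by_cases hx : s = x
        · subst hx; simp; omega
        · simp [hx]
    set m2 : RGen n →₀ ℕ := m0 + (Finsupp.single (Sum.inl s) 1 + Finsupp.single (Sum.inr d) 1)
      with hm2def
    have hswap : (d.1 : ℤ) • mon n m = (s.1 : ℤ) • mon n m2 := by
      rw [hmm, hm2def, mon_add, mon_add, mon_add, mon_add, ← mul_smul_comm, swap_gen,
        mul_smul_comm]
    have vl : ∀ x, m2 (Sum.inl x) + (if x = d then 1 else 0) =
        m (Sum.inl x) + (if x = s then 1 else 0) := by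
      intro x
      rw [hmm, hm2def]
      simp [Finsupp.single_apply, eq_comm]
      omega
    have vr : ∀ x, m2 (Sum.inr x) + (if x = s then 1 else 0) =
        m (Sum.inr x) + (if x = d then 1 else 0) := by
      intro x
      rw [hmm, hm2def]
      simp [Finsupp.single_apply, eq_comm]
      omega
    have hdeg : mdeg n m2 = degAlpha n c (μ : ℤ) := by
      rw [mdeg_eq_iff]
      refine ⟨fun x => ?_, ?_⟩
      · have := vl x; have := vr x; have := hm2.1 x; omega
      · have := Finset.sum_congr (rfl : (Finset.univ : Finset (DivIdx n)) = _) fun x _ => vl x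
        simp only [Finset.sum_add_distrib, Finset.sum_ite_eq', Finset.mem_univ, if_true] at this
        have := hm2.2
        omega
    have hN2 : ∑ x, (m2 (Sum.inr x) - m' (Sum.inr x)) = N := by
      have h1 : ∑ x, (m2 (Sum.inr x) - m' (Sum.inr x) + (if x = s then 1 else 0)) =
          ∑ x, (m (Sum.inr x) - m' (Sum.inr x)) := by
        refine Finset.sum_congr rfl fun x _ => ?_
        have h2 := vr x
        by_cases hxs : x = s
        · subst hxs
          simp only [if_true, if_neg (Ne.symm hds)] at h2 ⊢
          omega
        · by_cases hxd : x = d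
          · subst hxd
            simp only [if_true, if_neg hxs] at h2 ⊢
            omega
          · simp only [if_neg hxd, if_neg hxs] at h2 ⊢
            omega
      simp only [Finset.sum_add_distrib, Finset.sum_ite_eq', Finset.mem_univ, if_true] at h1
      omega
    obtain ⟨z, hz⟩ := ih m2 hdeg hN2
    -- `b` inverts `d` modulo `q`
    obtain ⟨a, b, hab⟩ : ∃ a b : ℤ, a * q + b * d.1 = 1 := by
      have : IsCoprime (q : ℤ) (d.1 : ℤ) :=
        Nat.isCoprime_iff_coprime.2 ((Nat.Prime.coprime_iff_not_dvd hq).2 hqd)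
      exact this
    refine ⟨b * s.1 * z, ?_⟩
    have h1 : e • mon n m = (b * e) • (d.1 : ℤ) • mon n m := by
      have h2 : e = a * (q * e) + b * e * d.1 := by linear_combination (-e) * hab
      rw [smul_smul]
      conv_lhs => rw [h2, add_smul]
      rw [n_kill n m s (by omega) _ (Dvd.dvd.mul_left he a), zero_add]
    calc e • mon n m = (b * s.1) • e • mon n m2 := by
          rw [h1, hswap, smul_smul, smul_smul]; congr 1; ring
      _ = _ := by rw [hz, smul_smul]

/-! ### Detecting the order -/

/-- For `q ∣ n`, the ring homomorphism `R → ZMod q` with `u_d ↦ 1` and `a_d ↦ d`. -/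
noncomputable def phi (n q : ℕ) (hq : q ∣ n) : Rring n →+* ZMod q :=
  Ideal.Quotient.lift (Ideal.span (relSet n))
    (MvPolynomial.eval₂Hom (Int.castRingHom (ZMod q))
      (Sum.elim (fun _ => 1) (fun d : DivIdx n => (d.1 : ZMod q))))
    (by
      intro a ha
      rw [← RingHom.mem_ker]
      refine (Ideal.span_le (I := RingHom.ker _)).2 ?_ ha
      rintro x (⟨d, rfl⟩ | ⟨⟨d, s⟩, rfl⟩)
      · rw [SetLike.mem_coe, RingHom.mem_ker, map_nsmul]
        simp only [MvPolynomial.coe_eval₂Hom, MvPolynomial.eval₂_X, Sum.elim_inr, nsmul_eq_mul]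
        rw [← Nat.cast_mul, Nat.div_mul_cancel d.2.1]
        exact (ZMod.natCast_eq_zero_iff _ _).2 hq
      · rw [SetLike.mem_coe, RingHom.mem_ker, map_sub, map_nsmul, map_nsmul, map_mul, map_mul]
        simp only [MvPolynomial.coe_eval₂Hom, MvPolynomial.eval₂_X, Sum.elim_inr, Sum.elim_inl,
          nsmul_eq_mul, mul_one, one_mul]
        -- both terms are the least common multiple of `d` and `s`
        rw [← Nat.cast_mul, ← Nat.cast_mul, Nat.div_mul_right_comm (Nat.gcd_dvd_left _ _),
          Nat.div_mul_right_comm (Nat.gcd_dvd_right _ _), mul_comm s.1, sub_self])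

lemma phi_mon_ne_zero (n q : ℕ) (hq : q ∣ n) (hp : q.Prime) (m : RGen n →₀ ℕ)
    (hm : ∀ d, m (Sum.inr d) ≠ 0 → ¬ q ∣ d.1) : phi n q hq (mon n m) ≠ 0 := by
  have := Fact.mk hp
  rw [mon, phi, Ideal.Quotient.lift_mk, MvPolynomial.coe_eval₂Hom, MvPolynomial.eval₂_monomial,
    map_one, one_mul, Finsupp.prod]
  refine Finset.prod_ne_zero_iff.2 fun g hg => ?_
  rcases g with d | d
  · simp
  · apply pow_ne_zero
    rw [Sum.elim_inr, Ne, ZMod.natCast_eq_zero_iff]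
    exact hm d (Finsupp.mem_support_iff.1 hg)

/-- A partition of unity for the primes dividing a squarefree `n`. -/
lemma exists_primary_idem (n : ℕ) (hn : Squarefree n) (h1 : n.primeFactors.Nonempty) :
    ∃ e : ℕ → ℤ, ∑ q ∈ n.primeFactors, e q = 1 ∧
      (∀ q ∈ n.primeFactors, (n : ℤ) ∣ q * e q) ∧
      ∀ q ∈ n.primeFactors, ∀ r ∈ n.primeFactors, r ≠ q → (r : ℤ) ∣ e q := by
  obtain ⟨w, hw⟩ := (exists_sum_eq_one_iff_pairwise_coprime (s := fun q : ℕ => (q : ℤ)) h1).2 (by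
    intro a b hab
    exact Nat.isCoprime_iff_coprime.2 ((Nat.coprime_primes (Nat.prime_of_mem_primeFactors a.2)
      (Nat.prime_of_mem_primeFactors b.2)).2 fun h => hab (Subtype.ext h)))
  refine ⟨_, hw, fun q hq => ⟨w q, ?_⟩, fun q hq r hr hrq => ?_⟩
  · have : (n : ℤ) = ∏ q ∈ n.primeFactors, (q : ℤ) := by
      rw [← Nat.cast_prod, Nat.prod_primeFactors_of_squarefree hn]
    rw [this, Finset.prod_eq_mul_prod_sdiff_singleton_of_mem hq]
    ring
  · exact Dvd.dvd.mul_left (Finset.dvd_prod_of_mem (fun q : ℕ => (q : ℤ))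
      (Finset.mem_sdiff.2 ⟨hr, by simpa using hrq⟩)) _

/-! ## STATEMENT 12
For every degree `α = Σ_d c_d ξ^d − 2μ` with all `c_d ≥ 0` (almost all zero) and
`0 ≤ μ < Σ_d c_d` (so that `|α| > 0`), the homogeneous component `R_α` of `R` in degree `α`
is a cyclic group of order `m(α)`. -/
theorem statement12 (k : ℕ) (p : Fin k → ℕ) (hp : ∀ i, Nat.Prime (p i))
    (hodd : ∀ i, Odd (p i)) (hinj : Function.Injective p)
    (n : ℕ) (hn : n = ∏ i, p i)
    (c : DivIdx n →₀ ℕ) (μ : ℕ) (hμ : (μ : ℤ) < ∑ d ∈ c.support, (c d : ℤ)) :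
    ∃ g : Rring n,
      Rcomp n (degAlpha n c (μ : ℤ)) = AddSubgroup.zmultiples g ∧
      addOrderOf g = mAlpha n c (μ : ℤ) := by
  classical
  have hsq : Squarefree n := by
    rw [hn]
    refine Finset.squarefree_prod_of_pairwise_isCoprime (fun i _ j _ hij => ?_)
      fun i _ => (hp i).prime.squarefree
    exact Nat.coprime_iff_isRelPrime.1 ((Nat.coprime_primes (hp i) (hp j)).2 (hinj.ne hij))
  have hn0 : n ≠ 0 := hsq.ne_zero
  have : Finite (DivIdx n) :=
    Set.Finite.subset (Set.finite_Iic n) fun d hd => Nat.le_of_dvd (Nat.pos_of_ne_zero hn0) hd.1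
  haveI : Fintype (DivIdx n) := Fintype.ofFinite _
  have hμ' : μ < ∑ d, c d := by
    have : ∑ d ∈ c.support, c d = ∑ d, c d :=
      Finset.sum_subset (Finset.subset_univ _) fun d _ hd => Finsupp.notMem_support_iff.1 hd
    rw [← this]
    exact_mod_cast hμ
  have hne : n.primeFactors.Nonempty := by
    rw [Nat.nonempty_primeFactors]
    by_contra h
    have h1 : n = 1 := by omega
    have : ∑ d, c d = 0 := Finset.sum_eq_zero fun d _ =>
      absurd ((Nat.dvd_one.1 (h1 ▸ d.2.1)).trans h1.symm) d.2.2
    omega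
  obtain ⟨e, hsum, hne1, hdvd⟩ := exists_primary_idem n hsq hne
  have hmA : mAlpha n c (μ : ℤ) = ∏ q ∈ n.primeFactors with
      (∑ d : DivIdx n, if q ∣ d.1 then c d else 0) ≤ μ, q := by
    rw [mAlpha, Finset.prod_filter]
    refine Finset.prod_congr rfl fun q _ => ?_
    have : (∑ d ∈ c.support, if q ∣ d.1 then (c d : ℤ) else 0) =
        ((∑ d : DivIdx n, if q ∣ d.1 then c d else 0 : ℕ) : ℤ) := by
      push_cast
      refine Finset.sum_subset (Finset.subset_univ _) fun d _ hd => ?_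
      simp [Finsupp.notMem_support_iff.1 hd]
    rw [this]
    simp only [Nat.cast_le]
  set S := {q ∈ n.primeFactors | (∑ d : DivIdx n, if q ∣ d.1 then c d else 0) ≤ μ} with hS
  have hSn : ∀ q ∈ S, q ∈ n.primeFactors := fun q hq => (Finset.mem_filter.1 hq).1
  choose! M hM hMg using fun (q : ℕ) (hq : q ∈ S) =>
    exists_good n c μ q hμ'.le (Finset.mem_filter.1 hq).2
  have hkill : ∀ m : RGen n →₀ ℕ, mdeg n m = degAlpha n c (μ : ℤ) → ∀ t : ℤ, (n : ℤ) ∣ t →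
      t • mon n m = 0 := fun m hm t ht => by
    obtain ⟨d, hd⟩ := exists_inr n c μ hμ' m hm
    exact n_kill n m d hd t ht
  have hmul : ∀ q ∈ n.primeFactors, ∀ t : ℤ, (q : ℤ) ∣ t → (n : ℤ) ∣ e q * t := by
    rintro q hq t ⟨w, rfl⟩
    rw [show e q * (q * w) = (q * e q) * w by ring]
    exact Dvd.dvd.mul_right (hne1 q hq) w
  have hone : ∀ q ∈ n.primeFactors, (q : ℤ) ∣ e q - 1 := by
    intro q hq
    rw [← hsum, ← Finset.add_sum_erase _ _ hq, sub_add_cancel_left, dvd_neg]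
    refine Finset.dvd_sum fun r hr => ?_
    exact hdvd r (Finset.mem_of_mem_erase hr) q hq (Finset.ne_of_mem_erase hr).symm
  set g : Rring n := ∑ q ∈ S, e q • mon n (M q) with hg
  have hidem : ∀ q ∈ S, e q • mon n (M q) = e q • g := by
    intro q hq
    rw [hg, Finset.smul_sum, Finset.sum_eq_single q]
    · rw [smul_smul, ← sub_eq_zero, ← sub_smul]
      refine hkill _ (hM q hq) _ ?_
      rw [show e q - e q * e q = - (e q * (e q - 1)) by ring, dvd_neg]
      exact hmul q (hSn q hq) _ (hone q (hSn q hq))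
    · intro r hr hrq
      rw [smul_smul]
      exact hkill _ (hM r hr) _
        (hmul q (hSn q hq) _ (hdvd r (hSn r hr) q (hSn q hq) hrq.symm))
    · exact fun h => absurd hq h
  refine ⟨g, le_antisymm ?_ ?_, ?_⟩
  · rw [Rcomp, AddSubgroup.closure_le]
    rintro x ⟨m, hm, rfl⟩
    change mon n m ∈ AddSubgroup.zmultiples g
    rw [← one_smul ℤ (mon n m), ← hsum, Finset.sum_smul]
    refine AddSubgroup.sum_mem _ fun q hq => ?_
    have hqp := Nat.prime_of_mem_primeFactors hq
    by_cases hqS : q ∈ S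
    · obtain ⟨z, hz⟩ := connect n c μ q hqp (e q) (hne1 q hq) (M q) (hM q hqS) (hMg q hqS) _
        m hm rfl
      rw [hz, hidem q hqS, smul_smul]
      exact AddSubgroup.zsmul_mem_zmultiples g _
    · have hlt : μ < ∑ d : DivIdx n, if q ∣ d.1 then c d else 0 := by
        by_contra! h
        exact hqS (Finset.mem_filter.2 ⟨hq, h⟩)
      obtain ⟨d, hd, hqd⟩ := exists_inr_dvd n c μ q hlt m hm
      rw [smul_mon_eq_zero n q hqp (e q) (hne1 q hq) m d hd hqd]
      exact AddSubgroup.zero_mem _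
  · rw [AddSubgroup.zmultiples_le]
    refine AddSubgroup.sum_mem _ fun q hq => AddSubgroup.zsmul_mem _ ?_ _
    exact AddSubgroup.subset_closure ⟨M q, hM q hq, rfl⟩
  · rw [hmA]
    apply Nat.dvd_antisymm
    · rw [addOrderOf_dvd_iff_nsmul_eq_zero, ← natCast_zsmul, hg, Finset.smul_sum]
      refine Finset.sum_eq_zero fun q hq => ?_
      rw [smul_smul, mul_comm]
      refine hkill _ (hM q hq) _ (hmul q (hSn q hq) _ ?_)
      exact_mod_cast Finset.dvd_prod_of_mem (fun q : ℕ => q) hq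
    · refine Finset.prod_primes_dvd _
        (fun q hq => (Nat.prime_of_mem_primeFactors (hSn q hq)).prime) fun q hq => ?_
      have hqp := Nat.prime_of_mem_primeFactors (hSn q hq)
      have := Fact.mk hqp
      have hqn := Nat.dvd_of_mem_primeFactors (hSn q hq)
      have hφ : phi n q hqn g = phi n q hqn (mon n (M q)) := by
        rw [hg, map_sum, Finset.sum_eq_single q]
        · rw [map_zsmul, zsmul_eq_mul]
          have := (ZMod.intCast_zmod_eq_zero_iff_dvd (e q - 1) q).2 (hone q (hSn q hq))
          rw [Int.cast_sub, Int.cast_one, sub_eq_zero] at this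
          rw [this, one_mul]
        · intro r hr hrq
          rw [map_zsmul, zsmul_eq_mul, (ZMod.intCast_zmod_eq_zero_iff_dvd (e r) q).2
            (hdvd r (hSn r hr) q (hSn q hq) hrq.symm), zero_mul]
        · exact fun h => absurd hq h
      have h0 := congrArg (phi n q hqn) (addOrderOf_nsmul_eq_zero g)
      rw [map_nsmul, map_zero, hφ, nsmul_eq_mul] at h0
      exact (ZMod.natCast_eq_zero_iff _ _).1
        ((mul_eq_zero.1 h0).resolve_right (phi_mon_ne_zero n q hqn hqp _ (hMg q hq)))
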